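/- Up to sign, C is the only nontrivial invariant cone in sl₂(ℝ): if D ⊆ sl₂(ℝ) is a closed convex cone that is pointed (D ∩ (−D) = {0}), generating (D − D = sl₂(ℝ)), and invariant under conjugation by every g ∈ SL₂(ℝ), then D = C or D = −C. -/

import Mathlib

/-!
STATEMENT 12: Up to sign, `C` is the only nontrivial invariant cone in `sl₂(ℝ)`: if
`D ⊆ sl₂(ℝ)` is a closed convex cone, pointed, generating, and invariant under conjugation by
every `g ∈ SL₂(ℝ)`, then `D = C` or `D = −C`.
-/

open Matrix

/-- The invariant positive cone of `sl₂(ℝ)`. -/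
def slCone : Set (Matrix (Fin 2) (Fin 2) ℝ) :=
  {X | ∃ a b c : ℝ, X = !![a, b; c, -a] ∧ 0 ≤ b ∧ c ≤ 0 ∧ a ^ 2 ≤ -(b * c)}

/-!
Right multiplication by `J = !![0, 1; -1, 0]` identifies the symmetric matrices with `sl₂(ℝ)`, the
congruence `S ↦ g S gᵀ` with conjugation by `g ∈ SL₂(ℝ)`, and the positive semidefinite matrices
with `C`. A closed cone invariant under congruence by `SLₙ(ℝ)` is also invariant under congruence by
every limit of matrices of positive determinant, such as `w vᵀ` after replacing `v` by `-v` if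
necessary. Hence it contains `(vᵀ S v) w wᵀ` together with `S`, so that it contains all positive
semidefinite matrices as soon as one of its members takes a positive value as a quadratic form, and
all negative semidefinite ones as soon as one takes a negative value.
-/

theorem exists_properCone_coe_eq {E : Type*} [AddCommGroup E] [Module ℝ E] [TopologicalSpace E]
    {D : Set E} (hne : D.Nonempty) (hclosed : IsClosed D) (hconvex : Convex ℝ D)
    (hcone : ∀ t : ℝ, 0 ≤ t → ∀ x ∈ D, t • x ∈ D) : ∃ K : ProperCone ℝ E, (K : Set E) = D := by
  obtain ⟨x₀, hx₀⟩ := hne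
  have hadd {x y : E} (hx : x ∈ D) (hy : y ∈ D) : x + y ∈ D := by
    have hmid := hconvex hx hy one_half_pos.le one_half_pos.le (add_halves 1)
    simpa [smul_smul] using hcone 2 zero_le_two _ hmid
  exact ⟨{
    carrier := D
    add_mem' := hadd
    zero_mem' := by simpa using hcone 0 le_rfl x₀ hx₀
    smul_mem' := fun r x hx ↦ hcone r r.2 x hx
    isClosed' := hclosed }, rfl⟩

theorem exists_posSemidef_sub_posSemidef {n : Type*} [Finite n] {S : Matrix n n ℝ}
    (hS : S.IsHermitian) : ∃ P Q : Matrix n n ℝ, P.PosSemidef ∧ Q.PosSemidef ∧ P - Q = S := by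
  classical
  have := Fintype.ofFinite n
  have hsq {T : Matrix n n ℝ} (hT : T.IsHermitian) : ((1 / 4 : ℝ) • (T * T)).PosSemidef := by
    simpa only [hT.eq] using (posSemidef_conjTranspose_mul_self T).smul (by norm_num : (0 : ℝ) ≤ _)
  -- `4 S = (S + 1)² - (S - 1)²`
  refine ⟨_, _, hsq (hS.add isHermitian_one), hsq (hS.sub isHermitian_one), ?_⟩
  noncomm_ring
  module

theorem eq_zero_of_posSemidef_of_neg_posSemidef {n : Type*} {S : Matrix n n ℝ}
    (hS : S.PosSemidef) (hnS : (-S).PosSemidef) : S = 0 := by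
  open scoped MatrixOrder in
  exact le_antisymm (neg_nonneg.mp hnS.nonneg) hS.nonneg

theorem isHermitian_fin_two_iff {A : Matrix (Fin 2) (Fin 2) ℝ} :
    A.IsHermitian ↔ A 0 1 = A 1 0 := by
  refine ⟨fun h ↦ by simpa using h.apply 1 0, fun h ↦ ?_⟩
  ext i j
  fin_cases i <;> fin_cases j <;> simp [h]

theorem posSemidef_fin_two_iff {A : Matrix (Fin 2) (Fin 2) ℝ} :
    A.PosSemidef ↔ A.IsHermitian ∧ 0 ≤ A 0 0 ∧ 0 ≤ A 1 1 ∧ 0 ≤ A.det := by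
  refine ⟨fun hA ↦ ⟨hA.isHermitian, hA.diag_nonneg, hA.diag_nonneg, hA.det_nonneg⟩, ?_⟩
  rintro ⟨hA, h00, h11, hdet⟩
  refine .of_dotProduct_mulVec_nonneg hA fun v ↦ ?_
  have hsymm : A 1 0 = A 0 1 := (isHermitian_fin_two_iff.mp hA).symm
  rw [det_fin_two, hsymm] at hdet
  have hform : star v ⬝ᵥ A *ᵥ v = A 0 0 * v 0 ^ 2 + 2 * A 0 1 * v 0 * v 1 + A 1 1 * v 1 ^ 2 := by
    simp only [star_trivial, dotProduct, mulVec, Fin.sum_univ_two, hsymm]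
    ring
  rw [hform]
  rcases h00.eq_or_lt with h0 | hpos
  · have hzero : A 0 1 = 0 := by
      rw [← h0] at hdet
      nlinarith only [hdet]
    simpa [← h0, hzero] using mul_nonneg h11 (sq_nonneg (v 1))
  · refine (mul_nonneg_iff_of_pos_left hpos).mp ?_
    calc (0 : ℝ) ≤ (A 0 0 * v 0 + A 0 1 * v 1) ^ 2
          + (A 0 0 * A 1 1 - A 0 1 * A 0 1) * v 1 ^ 2 := by positivity
      _ = A 0 0 * (A 0 0 * v 0 ^ 2 + 2 * A 0 1 * v 0 * v 1 + A 1 1 * v 1 ^ 2) := by ring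

theorem vecMulVec_mul_mul_transpose {n : Type*} [Fintype n] (S : Matrix n n ℝ) (v w : n → ℝ) :
    vecMulVec w v * S * (vecMulVec w v)ᵀ = (v ⬝ᵥ S *ᵥ v) • vecMulVec w w := by
  rw [transpose_vecMulVec, Matrix.mul_assoc, mul_vecMulVec, vecMulVec_mul_vecMulVec,
    vecMulVec_smul]

section Congruence

variable {n : Type*} [Fintype n] [DecidableEq n]

/-- Invariance of a set of bilinear forms, given by their Gram matrices, under the action
`S ↦ g S gᵀ` of `SLₙ(ℝ)` by change of variables. -/
def IsCongruenceInvariant (K : Set (Matrix n n ℝ)) : Prop :=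
  ∀ g : Matrix n n ℝ, g.det = 1 → ∀ S ∈ K, g * S * gᵀ ∈ K

theorem exists_pos_smul_of_det_pos {g : Matrix n n ℝ} (hg : 0 < g.det) :
    ∃ r : ℝ, 0 < r ∧ ∃ h : Matrix n n ℝ, h.det = 1 ∧ g = r • h := by
  obtain ⟨r, hr, hdet⟩ : ∃ r : ℝ, 0 < r ∧ r ^ Fintype.card n = g.det := by
    cases isEmpty_or_nonempty n
    · exact ⟨1, one_pos, by simp⟩
    · exact ⟨_, Real.rpow_pos_of_pos hg _, Real.rpow_inv_natCast_pow hg.le Fintype.card_ne_zero⟩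
  refine ⟨r, hr, r⁻¹ • g, ?_, (smul_inv_smul₀ hr.ne' g).symm⟩
  rw [det_smul, ← hdet, ← mul_pow, inv_mul_cancel₀ hr.ne', one_pow]

theorem det_smul_one_add_vecMulVec_pos {v w : n → ℝ} (hvw : 0 ≤ v ⬝ᵥ w) {t : ℝ} (ht : 0 < t) :
    0 < (t • (1 : Matrix n n ℝ) + vecMulVec w v).det := by
  have hfactor : t • (1 : Matrix n n ℝ) + vecMulVec w v = t • (1 + vecMulVec (t⁻¹ • w) v) := by
    rw [smul_add, smul_vecMulVec, smul_inv_smul₀ ht.ne']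
  rw [hfactor, det_smul, vecMulVec_eq Unit, det_one_add_replicateCol_mul_replicateRow,
    dotProduct_smul, smul_eq_mul]
  positivity

namespace IsCongruenceInvariant

variable {K : ProperCone ℝ (Matrix n n ℝ)} {S : Matrix n n ℝ}

theorem mem_of_det_pos (hK : IsCongruenceInvariant (K : Set (Matrix n n ℝ))) (hS : S ∈ K)
    {g : Matrix n n ℝ} (hg : 0 < g.det) : g * S * gᵀ ∈ K := by
  obtain ⟨r, hr, h, hh, rfl⟩ := exists_pos_smul_of_det_pos hg
  have hmem := K.smul_mem (K.smul_mem (hK h hh S hS) hr.le) hr.le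
  simpa only [transpose_smul, Matrix.smul_mul, Matrix.mul_smul] using hmem

theorem smul_vecMulVec_mem (hK : IsCongruenceInvariant (K : Set (Matrix n n ℝ))) (hS : S ∈ K)
    (v w : n → ℝ) : (v ⬝ᵥ S *ᵥ v) • vecMulVec w w ∈ K := by
  wlog hvw : 0 ≤ v ⬝ᵥ w generalizing v
  · simpa [mulVec_neg] using this (-v) (by rw [neg_dotProduct]; linarith)
  let γ : ℝ → Matrix n n ℝ := fun t ↦ t • 1 + vecMulVec w v
  have hcont : Continuous fun t ↦ γ t * S * (γ t)ᵀ := by fun_prop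
  have hlim : Filter.Tendsto (fun t ↦ γ t * S * (γ t)ᵀ) (nhdsWithin 0 (Set.Ioi 0))
      (nhds ((v ⬝ᵥ S *ᵥ v) • vecMulVec w w)) := by
    simpa [γ, ← vecMulVec_mul_mul_transpose] using (hcont.tendsto 0).mono_left nhdsWithin_le_nhds
  refine K.isClosed.mem_of_tendsto hlim ?_
  filter_upwards [self_mem_nhdsWithin] with t ht
  exact hK.mem_of_det_pos hS (det_smul_one_add_vecMulVec_pos hvw ht)

theorem smul_posSemidef_mem (hK : IsCongruenceInvariant (K : Set (Matrix n n ℝ))) (hS : S ∈ K)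
    (v : n → ℝ) {P : Matrix n n ℝ} (hP : P.PosSemidef) : (v ⬝ᵥ S *ᵥ v) • P ∈ K := by
  obtain ⟨m, w, rfl⟩ := posSemidef_iff_eq_sum_vecMulVec.mp hP
  rw [Finset.smul_sum]
  exact sum_mem fun i _ ↦ hK.smul_vecMulVec_mem hS v (w i)

theorem posSemidef_mem (hK : IsCongruenceInvariant (K : Set (Matrix n n ℝ))) (hS : S ∈ K)
    {v : n → ℝ} (hv : 0 < v ⬝ᵥ S *ᵥ v) {P : Matrix n n ℝ} (hP : P.PosSemidef) : P ∈ K := by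
  simpa [smul_smul, hv.ne'] using
    K.smul_mem (hK.smul_posSemidef_mem hS v hP) (inv_nonneg.mpr hv.le)

theorem neg_posSemidef_mem (hK : IsCongruenceInvariant (K : Set (Matrix n n ℝ))) (hS : S ∈ K)
    {v : n → ℝ} (hv : v ⬝ᵥ S *ᵥ v < 0) {P : Matrix n n ℝ} (hP : P.PosSemidef) : -P ∈ K := by
  have hscale : 0 ≤ -(v ⬝ᵥ S *ᵥ v)⁻¹ := by simpa using hv.le
  simpa [smul_smul, hv.ne] using K.smul_mem (hK.smul_posSemidef_mem hS v hP) hscale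

theorem posSemidef_mem_or_neg_posSemidef
    (hK : IsCongruenceInvariant (K : Set (Matrix n n ℝ))) (hherm : ∀ S ∈ K, S.IsHermitian) :
    (∀ P : Matrix n n ℝ, P.PosSemidef → P ∈ K) ∨ ∀ S ∈ K, (-S).PosSemidef := by
  by_cases! h : ∃ S ∈ K, ∃ v, 0 < v ⬝ᵥ S *ᵥ v
  · obtain ⟨S, hS, v, hv⟩ := h
    exact .inl fun P ↦ hK.posSemidef_mem hS hv
  · refine .inr fun S hS ↦ .of_dotProduct_mulVec_nonneg (hherm S hS).neg fun v ↦ ?_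
    simpa [neg_mulVec] using h S hS v

theorem neg_posSemidef_mem_or_posSemidef
    (hK : IsCongruenceInvariant (K : Set (Matrix n n ℝ))) (hherm : ∀ S ∈ K, S.IsHermitian) :
    (∀ P : Matrix n n ℝ, P.PosSemidef → -P ∈ K) ∨ ∀ S ∈ K, S.PosSemidef := by
  by_cases! h : ∃ S ∈ K, ∃ v, v ⬝ᵥ S *ᵥ v < 0
  · obtain ⟨S, hS, v, hv⟩ := h
    exact .inl fun P ↦ hK.neg_posSemidef_mem hS hv
  · exact .inr fun S hS ↦ .of_dotProduct_mulVec_nonneg (hherm S hS) (h S hS)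

theorem eq_zero_or_isHermitian_or_posSemidef_or_neg_posSemidef
    (hK : IsCongruenceInvariant (K : Set (Matrix n n ℝ))) (hherm : ∀ S ∈ K, S.IsHermitian) :
    (K : Set (Matrix n n ℝ)) = {0} ∨ (K : Set (Matrix n n ℝ)) = {S | S.IsHermitian} ∨
      (K : Set (Matrix n n ℝ)) = {S | S.PosSemidef} ∨
      (K : Set (Matrix n n ℝ)) = {S | (-S).PosSemidef} := by
  rcases hK.posSemidef_mem_or_neg_posSemidef hherm with hpos | hneg <;>
    rcases hK.neg_posSemidef_mem_or_posSemidef hherm with hneg' | hpos'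
  · refine .inr <| .inl <| Set.Subset.antisymm hherm fun S hS ↦ ?_
    obtain ⟨P, Q, hP, hQ, rfl⟩ := exists_posSemidef_sub_posSemidef hS
    exact sub_eq_add_neg P Q ▸ add_mem (hpos P hP) (hneg' Q hQ)
  · exact .inr <| .inr <| .inl <| Set.Subset.antisymm hpos' hpos
  · refine .inr <| .inr <| .inr <| Set.Subset.antisymm hneg fun S hS ↦ ?_
    simpa using hneg' _ hS
  · refine .inl <| Set.Subset.antisymm
      (fun S hS ↦ eq_zero_of_posSemidef_of_neg_posSemidef (hpos' S hS) (hneg S hS)) ?_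
    simp

end IsCongruenceInvariant

end Congruence

section SpecialLinear

/-- The standard symplectic matrix of size two, which generates the rotations in `SL₂(ℝ)`. -/
def symplecticMatrix : Matrix (Fin 2) (Fin 2) ℝ := !![0, 1; -1, 0]

theorem transpose_mul_symplecticMatrix (g : Matrix (Fin 2) (Fin 2) ℝ) :
    gᵀ * symplecticMatrix = symplecticMatrix * g.adjugate := by
  rw [adjugate_fin_two]
  ext i j
  fin_cases i <;> fin_cases j <;> simp [symplecticMatrix, Matrix.mul_apply]

theorem symplecticMatrix_mul_transpose : symplecticMatrix * symplecticMatrixᵀ = 1 := by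
  ext i j
  fin_cases i <;> fin_cases j <;> simp [symplecticMatrix, Matrix.mul_apply]

theorem transpose_mul_symplecticMatrix_self : symplecticMatrixᵀ * symplecticMatrix = 1 :=
  mul_eq_one_comm.mp symplecticMatrix_mul_transpose

/-- The isomorphism `S ↦ S * symplecticMatrix`, through which congruence by `SL₂(ℝ)` becomes
conjugation. It restricts to an isomorphism of the symmetric matrices with `sl₂(ℝ)`. -/
def mulSymplecticMatrix : Matrix (Fin 2) (Fin 2) ℝ ≃L[ℝ] Matrix (Fin 2) (Fin 2) ℝ where
  toFun S := S * symplecticMatrix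
  invFun X := X * symplecticMatrixᵀ
  map_add' S T := Matrix.add_mul S T symplecticMatrix
  map_smul' r S := Matrix.smul_mul r S symplecticMatrix
  left_inv S := by simp only [Matrix.mul_assoc, symplecticMatrix_mul_transpose, Matrix.mul_one]
  right_inv X := by
    simp only [Matrix.mul_assoc, transpose_mul_symplecticMatrix_self, Matrix.mul_one]
  continuous_toFun := by fun_prop
  continuous_invFun := by fun_prop

theorem mulSymplecticMatrix_eq (S : Matrix (Fin 2) (Fin 2) ℝ) :
    mulSymplecticMatrix S = !![-S 0 1, S 0 0; -S 1 1, S 1 0] := by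
  ext i j
  fin_cases i <;> fin_cases j <;>
    simp [mulSymplecticMatrix, symplecticMatrix, Matrix.mul_apply]

theorem mulSymplecticMatrix_congruence {g : Matrix (Fin 2) (Fin 2) ℝ} (hg : g.det = 1)
    (S : Matrix (Fin 2) (Fin 2) ℝ) :
    mulSymplecticMatrix (g * S * gᵀ) = g * mulSymplecticMatrix S * g⁻¹ := by
  change g * S * gᵀ * symplecticMatrix = g * (S * symplecticMatrix) * g⁻¹
  rw [inv_def, hg, Ring.inverse_one, one_smul]
  simp only [Matrix.mul_assoc, transpose_mul_symplecticMatrix]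

theorem mulSymplecticMatrix_preimage_trace_eq_zero :
    mulSymplecticMatrix ⁻¹' {X | X.trace = 0} = {S | S.IsHermitian} := by
  ext S
  change (mulSymplecticMatrix S).trace = 0 ↔ S.IsHermitian
  rw [mulSymplecticMatrix_eq, trace_fin_two_of, neg_add_eq_zero, isHermitian_fin_two_iff]

theorem of_mem_slCone_iff {a b c d : ℝ} :
    !![a, b; c, d] ∈ slCone ↔ d = -a ∧ 0 ≤ b ∧ c ≤ 0 ∧ a ^ 2 ≤ -(b * c) := by
  constructor
  · rintro ⟨a', b', c', h, hcone⟩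
    obtain ⟨⟨rfl, rfl⟩, rfl, rfl⟩ : (a = a' ∧ b = b') ∧ c = c' ∧ d = -a' := by simpa using h
    exact ⟨rfl, hcone⟩
  · rintro ⟨rfl, hcone⟩
    exact ⟨a, b, c, rfl, hcone⟩

theorem mulSymplecticMatrix_preimage_slCone :
    mulSymplecticMatrix ⁻¹' slCone = {S | S.PosSemidef} := by
  ext S
  change mulSymplecticMatrix S ∈ slCone ↔ S.PosSemidef
  rw [mulSymplecticMatrix_eq, of_mem_slCone_iff, posSemidef_fin_two_iff, isHermitian_fin_two_iff,
    det_fin_two, neg_neg, neg_nonpos, eq_comm]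
  refine and_congr_right fun hsymm ↦ and_congr_right' (and_congr_right' ?_)
  rw [← hsymm, sub_nonneg, mul_neg, neg_neg, neg_sq, sq]

theorem mulSymplecticMatrix_preimage_neg_slCone :
    mulSymplecticMatrix ⁻¹' (-slCone) = {S | (-S).PosSemidef} := by
  ext S
  change -mulSymplecticMatrix S ∈ slCone ↔ -S ∈ {S | S.PosSemidef}
  rw [← mulSymplecticMatrix_preimage_slCone, Set.mem_preimage, map_neg]

end SpecialLinear

theorem invariant_cone_sl2_unique_general (D : Set (Matrix (Fin 2) (Fin 2) ℝ))
    (hsl : ∀ X ∈ D, X.trace = 0)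
    (hclosed : IsClosed D)
    (hconvex : Convex ℝ D)
    (hcone : ∀ t : ℝ, 0 ≤ t → ∀ X ∈ D, t • X ∈ D)
    (hnontrivial : D.Nontrivial)
    (hproper : D ≠ {X | X.trace = 0})
    (hinv : ∀ g : Matrix (Fin 2) (Fin 2) ℝ, g.det = 1 → (fun X => g * X * g⁻¹) '' D = D) :
    D = slCone ∨ D = -slCone := by
  obtain ⟨C, rfl⟩ := exists_properCone_coe_eq hnontrivial.nonempty hclosed hconvex hcone
  let φ := mulSymplecticMatrix
  let K : ProperCone ℝ (Matrix (Fin 2) (Fin 2) ℝ) := C.comap (φ : _ →L[ℝ] _)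
  have hK : IsCongruenceInvariant (K : Set (Matrix (Fin 2) (Fin 2) ℝ)) := by
    intro g hg S hS
    change φ (g * S * gᵀ) ∈ (C : Set _)
    rw [mulSymplecticMatrix_congruence hg, ← hinv g hg]
    exact Set.mem_image_of_mem _ hS
  have hherm : (K : Set (Matrix (Fin 2) (Fin 2) ℝ)) ⊆ {S | S.IsHermitian} :=
    mulSymplecticMatrix_preimage_trace_eq_zero ▸ Set.preimage_mono hsl
  have hφ := φ.surjective.preimage_injective
  rcases hK.eq_zero_or_isHermitian_or_posSemidef_or_neg_posSemidef hherm with h | h | h | h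
  · have hzero : φ ⁻¹' {0} = {0} := by
      ext S
      simp
    exact absurd (hφ (h.trans hzero.symm)) hnontrivial.ne_singleton
  · exact absurd (hφ (h.trans mulSymplecticMatrix_preimage_trace_eq_zero.symm)) hproper
  · exact .inl (hφ (h.trans mulSymplecticMatrix_preimage_slCone.symm))
  · exact .inr (hφ (h.trans mulSymplecticMatrix_preimage_neg_slCone.symm))

theorem invariant_cone_sl2_unique (D : Set (Matrix (Fin 2) (Fin 2) ℝ))
    (hsl : ∀ X ∈ D, X.trace = 0)
    (hclosed : IsClosed D)
    (hconvex : Convex ℝ D)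
    (hcone : ∀ t : ℝ, 0 ≤ t → ∀ X ∈ D, t • X ∈ D)
    (hpointed : D ∩ (-D) = {0})
    (hgen : ∀ X : Matrix (Fin 2) (Fin 2) ℝ, X.trace = 0 → ∃ Y ∈ D, ∃ Z ∈ D, X = Y - Z)
    (hinv : ∀ g : Matrix (Fin 2) (Fin 2) ℝ, g.det = 1 → (fun X => g * X * g⁻¹) '' D = D) :
    D = slCone ∨ D = -slCone := by
  have hE : (!![0, 1; 0, 0] : Matrix (Fin 2) (Fin 2) ℝ) ≠ 0 := fun h ↦ by
    simpa using congrFun₂ h 0 1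
  obtain ⟨Y, hY, Z, hZ, hYZ⟩ := hgen !![0, 1; 0, 0] (by simp)
  have hnontrivial : D.Nontrivial :=
    Set.nontrivial_of_mem_mem_ne hY hZ (sub_ne_zero.mp (hYZ ▸ hE))
  have hproper : D ≠ {X | X.trace = 0} := by
    rintro rfl
    exact hE (hpointed.subset ⟨by simp, by simp⟩)
  exact invariant_cone_sl2_unique_general D hsl hclosed hconvex hcone hnontrivial hproper hinv
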